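/- Let T be a uni-trivalent tree and fix two distinct leaves v, w. Define u(T) recursively by the reduction of Lemma 2.3: if T is a single edge then u(T) = 1; otherwise pick any leaf x ∉ {v,w} with neighbor y and reduced tree T', and set u(T) = u(T') if y ∉ P(v,w) and u(T) = 2·u(T') if y ∈ P(v,w). Then u(T) = 2^{d(v,w)−1}, independently of all choices of reducing leaf. -/

import Mathlib

open scoped Classical

/-- A uni-trivalent tree (finite tree with all vertex degrees 1 or 3) with two marked
distinct leaves `v`, `w`. -/
structure MarkedUniTrivalentTree where
  /-- number of vertices -/
  n : ℕ
  /-- the underlying graph -/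
  G : SimpleGraph (Fin n)
  tree : G.IsTree
  deg : ∀ u : Fin n, G.degree u = 1 ∨ G.degree u = 3
  /-- first marked leaf -/
  v : Fin n
  /-- second marked leaf -/
  w : Fin n
  hv : G.degree v = 1
  hw : G.degree w = 1
  hvw : v ≠ w

/-- `T'` is the reduction of `T` at the auxiliary leaf `x ∉ {v, w}` with neighbor `y`:
delete `x` and `y` (and the edges incident to `y`) and join the other two neighbors
`s`, `t` of `y` by a new edge.  This is expressed via an injection `φ` of the vertices of
`T'` onto the vertices of `T` other than `x` and `y`, preserving the marked leaves. -/
def IsReduction (T : MarkedUniTrivalentTree) (x y : Fin T.n)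
    (T' : MarkedUniTrivalentTree) : Prop :=
  T.G.Adj x y ∧ T.G.degree x = 1 ∧ x ≠ T.v ∧ x ≠ T.w ∧
  ∃ φ : Fin T'.n → Fin T.n, Function.Injective φ ∧
    (∀ z : Fin T.n, (z ≠ x ∧ z ≠ y) ↔ z ∈ Set.range φ) ∧
    φ T'.v = T.v ∧ φ T'.w = T.w ∧
    ∃ s t : Fin T.n, s ≠ t ∧ T.G.Adj y s ∧ T.G.Adj y t ∧ s ≠ x ∧ t ≠ x ∧
      ∀ a b : Fin T'.n, T'.G.Adj a b ↔
        (T.G.Adj (φ a) (φ b) ∨ (φ a = s ∧ φ b = t) ∨ (φ a = t ∧ φ b = s))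

section helpers

variable {V V' : Type} [Fintype V] [Fintype V'] {G : SimpleGraph V} {H : SimpleGraph V'}
  {φ : V' → V} {x y s t : V}

theorem red_degree (hφ : Function.Injective φ)
    (hr : ∀ z : V, (z ≠ x ∧ z ≠ y) ↔ z ∈ Set.range φ)
    (hx : ∀ z, G.Adj x z ↔ z = y) (hy : ∀ z, G.Adj y z ↔ z = x ∨ z = s ∨ z = t)
    (hst : s ≠ t) (hnst : ¬ G.Adj s t) (hsx : s ≠ x) (htx : t ≠ x)
    (hH : ∀ a b, H.Adj a b ↔
      (G.Adj (φ a) (φ b) ∨ (φ a = s ∧ φ b = t) ∨ (φ a = t ∧ φ b = s))) (a : V') :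
    H.degree a = G.degree (φ a) := by
  have hax : ∀ b, φ b ≠ x := fun b => ((hr (φ b)).2 ⟨b, rfl⟩).1
  have hay : ∀ b, φ b ≠ y := fun b => ((hr (φ b)).2 ⟨b, rfl⟩).2
  have hys : G.Adj y s := (hy s).2 (by simp)
  have hyt : G.Adj y t := (hy t).2 (by simp)
  obtain ⟨s', hs'⟩ := (hr s).1 ⟨hsx, hys.ne'⟩
  obtain ⟨t', ht'⟩ := (hr t).1 ⟨htx, hyt.ne'⟩
  have hnts : ¬ G.Adj t s := fun h => hnst h.symm
  rw [← SimpleGraph.card_neighborFinset_eq_degree, ← SimpleGraph.card_neighborFinset_eq_degree]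
  refine Finset.card_bij (fun b _ => if G.Adj (φ a) (φ b) then φ b else y) ?_ ?_ ?_
  · intro b hb
    rw [SimpleGraph.mem_neighborFinset] at hb ⊢
    have := (hH a b).1 hb
    split_ifs with h
    · exact h
    · rcases this with h' | h' | h'
      · exact absurd h' h
      · rw [h'.1]; exact hys.symm
      · rw [h'.1]; exact hyt.symm
  · intro b hb c hc h
    rw [SimpleGraph.mem_neighborFinset] at hb hc
    have hb := (hH a b).1 hb
    have hc := (hH a c).1 hc
    apply hφ
    have h1 := hay b
    have h2 := hay c
    split_ifs at h with h3 h4 h5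
    · exact h
    · exact absurd h h1
    · exact absurd h.symm h2
    · grind
  · intro z hz
    rw [SimpleGraph.mem_neighborFinset] at hz
    by_cases hzx : z = x
    · subst hzx
      exact absurd ((hx _).1 hz.symm) (hay a)
    by_cases hzy : z = y
    · subst hzy
      rcases (hy _).1 hz.symm with h | h | h
      · exact absurd h (hax a)
      · refine ⟨t', ?_, ?_⟩
        · rw [SimpleGraph.mem_neighborFinset, hH]; simp [h, ht']
        · rw [h, ht', if_neg hnst]
      · refine ⟨s', ?_, ?_⟩
        · rw [SimpleGraph.mem_neighborFinset, hH]; simp [h, hs']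
        · rw [h, hs', if_neg hnts]
    · obtain ⟨b, rfl⟩ := (hr z).1 ⟨hzx, hzy⟩
      exact ⟨b, by rw [SimpleGraph.mem_neighborFinset, hH]; exact Or.inl hz, if_pos hz⟩

theorem red_tree (hG : G.IsTree) (hφ : Function.Injective φ)
    (hr : ∀ z : V, (z ≠ x ∧ z ≠ y) ↔ z ∈ Set.range φ)
    (hx : ∀ z, G.Adj x z ↔ z = y) (hy : ∀ z, G.Adj y z ↔ z = x ∨ z = s ∨ z = t)
    (hst : s ≠ t) (hnst : ¬ G.Adj s t) (hsx : s ≠ x) (htx : t ≠ x)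
    (hdx : G.degree x = 1) (hdy : G.degree y = 3)
    (hH : ∀ a b, H.Adj a b ↔
      (G.Adj (φ a) (φ b) ∨ (φ a = s ∧ φ b = t) ∨ (φ a = t ∧ φ b = s))) :
    H.IsTree := by
  have hdeg := red_degree hφ hr hx hy hst hnst hsx htx hH
  have hys : G.Adj y s := (hy s).2 (by simp)
  have hyt : G.Adj y t := (hy t).2 (by simp)
  have hxy : G.Adj x y := (hx y).2 rfl
  obtain ⟨s', hs'⟩ := (hr s).1 ⟨hsx, hys.ne'⟩
  obtain ⟨t', ht'⟩ := (hr t).1 ⟨htx, hyt.ne'⟩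
  have hst' : H.Reachable s' t' := ((hH s' t').2 (by simp [hs', ht'])).reachable
  have hconn : H.Connected := by
    -- collapse `x` and `y` onto `s'`
    let f : V → V' := fun z => if h : z ≠ x ∧ z ≠ y then ((hr z).1 h).choose else s'
    have hfφ : ∀ a, f (φ a) = a := by
      intro a
      have h : φ a ≠ x ∧ φ a ≠ y := (hr _).2 ⟨a, rfl⟩
      apply hφ
      simp only [f, dif_pos h]
      exact ((hr (φ a)).1 h).choose_spec
    have hfx : f x = s' := by simp [f]
    have hfy : f y = s' := by simp [f]
    have hfs : f s = s' := by rw [← hs', hfφ]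
    have hft : f t = t' := by rw [← ht', hfφ]
    have hyz : ∀ z, G.Adj y z → H.Reachable s' (f z) := by
      intro z hz
      rcases (hy z).1 hz with rfl | rfl | rfl
      · rw [hfx]
      · rw [hfs]
      · rw [hft]; exact hst'
    have key : ∀ a b, G.Adj a b → H.Reachable (f a) (f b) := by
      intro a b hab
      by_cases hay : a = y
      · subst hay; rw [hfy]; exact hyz b hab
      by_cases hby : b = y
      · subst hby; rw [hfy]; exact (hyz a hab.symm).symm
      by_cases hax : a = x
      · subst hax; exact absurd ((hx b).1 hab) hby
      by_cases hbx : b = x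
      · subst hbx; exact absurd ((hx a).1 hab.symm) hay
      obtain ⟨a', rfl⟩ := (hr a).1 ⟨hax, hay⟩
      obtain ⟨b', rfl⟩ := (hr b).1 ⟨hbx, hby⟩
      rw [hfφ, hfφ]
      exact ((hH a' b').2 (Or.inl hab)).reachable
    have key2 : ∀ a b (p : G.Walk a b), H.Reachable (f a) (f b) := by
      intro a b p
      induction p with
      | nil => exact SimpleGraph.Reachable.refl _
      | cons h p ih => exact (key _ _ h).trans ih
    have : Nonempty V' := ⟨s'⟩
    refine SimpleGraph.Connected.mk ?_
    intro a b
    obtain ⟨p⟩ := hG.1 (φ a) (φ b)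
    have := key2 _ _ p
    rwa [hfφ, hfφ] at this
  rw [SimpleGraph.isTree_iff_connected_and_card]
  refine ⟨hconn, ?_⟩
  have himg : (Finset.univ : Finset V) = insert x (insert y (Finset.univ.map ⟨φ, hφ⟩)) := by
    ext z
    have := hr z
    simp only [Set.mem_range] at this
    simp
    grind
  have hyn : y ∉ (Finset.univ.map ⟨φ, hφ⟩ : Finset V) := by
    have := hr y
    simp at this ⊢
    exact this
  have hxn : x ∉ insert y (Finset.univ.map ⟨φ, hφ⟩ : Finset V) := by
    have := hr x
    simp at this ⊢
    exact ⟨hxy.ne, this⟩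
  have hsumG : ∑ z, G.degree z = 1 + (3 + ∑ a, H.degree a) := by
    rw [himg, Finset.sum_insert hxn, Finset.sum_insert hyn, Finset.sum_map, hdx, hdy]
    simp [hdeg]
  have hcard : Fintype.card V = Fintype.card V' + 2 := by
    rw [← Finset.card_univ, himg, Finset.card_insert_of_notMem hxn,
      Finset.card_insert_of_notMem hyn, Finset.card_map, Finset.card_univ]
  rw [SimpleGraph.sum_degrees_eq_twice_card_edges,
    SimpleGraph.sum_degrees_eq_twice_card_edges] at hsumG
  have h1 := hG.card_edgeFinset
  rw [Nat.card_eq_fintype_card, Nat.card_eq_fintype_card, ← SimpleGraph.edgeFinset_card]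
  omega

theorem red_lift (hφ : Function.Injective φ)
    (hr : ∀ a, φ a ≠ y) (hys : G.Adj y s) (hyt : G.Adj y t)
    (hH : ∀ a b, H.Adj a b ↔
      (G.Adj (φ a) (φ b) ∨ (φ a = s ∧ φ b = t) ∨ (φ a = t ∧ φ b = s)))
    {a b : V'} (q : H.Walk a b) (hq : q.IsPath) :
    ∃ p : G.Walk (φ a) (φ b), p.IsPath ∧
      (∀ z ∈ p.support, z = y ∨ ∃ c ∈ q.support, φ c = z) ∧
      ((y ∉ p.support ∧ p.length = q.length) ∨
       (y ∈ p.support ∧ p.length = q.length + 1 ∧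
        (∀ c, φ c = s → c ∈ q.support) ∧ (∀ c, φ c = t → c ∈ q.support))) := by
  induction q with
  | nil =>
    refine ⟨.nil, by simp, by simp, Or.inl ?_⟩
    simp [(hr _).symm]
  | @cons a c b h q ih =>
    rw [SimpleGraph.Walk.cons_isPath_iff] at hq
    obtain ⟨p, hp, hsup, hcase⟩ := ih hq.1
    have hap : φ a ∉ p.support := by
      intro hmem
      rcases hsup _ hmem with h1 | ⟨d, hd, h1⟩
      · exact hr a h1
      · exact hq.2 (hφ h1 ▸ hd)
    have main : ∀ s t : V, G.Adj y s → G.Adj y t → φ a = s → φ c = t →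
        y ∉ p.support → p.length = q.length →
        ∃ p : G.Walk (φ a) (φ b), p.IsPath ∧
          (∀ z ∈ p.support, z = y ∨ ∃ c' ∈ (SimpleGraph.Walk.cons h q).support, φ c' = z) ∧
          (y ∈ p.support ∧ p.length = (SimpleGraph.Walk.cons h q).length + 1 ∧
            (∀ c', φ c' = s → c' ∈ (SimpleGraph.Walk.cons h q).support) ∧
            (∀ c', φ c' = t → c' ∈ (SimpleGraph.Walk.cons h q).support)) := by
      rintro s t hs ht rfl rfl hy hl
      refine ⟨.cons hs.symm (.cons ht p), ?_, ?_, ?_⟩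
      · simp [SimpleGraph.Walk.cons_isPath_iff, hp, hy, hap, hr a]
      · intro z hz
        simp only [SimpleGraph.Walk.support_cons, List.mem_cons] at hz ⊢
        rcases hz with rfl | rfl | hz
        · exact Or.inr ⟨a, by simp⟩
        · exact Or.inl rfl
        · rcases hsup z hz with h1 | ⟨d, hd, h1⟩
          · exact Or.inl h1
          · exact Or.inr ⟨d, Or.inr hd, h1⟩
      · refine ⟨by simp, by simp [hl], ?_, ?_⟩
        · intro c' hc'
          rw [hφ hc']; simp
        · intro c' hc'
          rw [hφ hc']; simp
    rcases (hH _ _).1 h with hg | hg | hg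
    · refine ⟨.cons hg p, by simp [SimpleGraph.Walk.cons_isPath_iff, hp, hap], ?_, ?_⟩
      · intro z hz
        simp only [SimpleGraph.Walk.support_cons, List.mem_cons] at hz ⊢
        rcases hz with rfl | hz
        · exact Or.inr ⟨a, by simp⟩
        · rcases hsup z hz with h1 | ⟨d, hd, h1⟩
          · exact Or.inl h1
          · exact Or.inr ⟨d, Or.inr hd, h1⟩
      · rcases hcase with ⟨h1, h2⟩ | ⟨h1, h2, h3, h4⟩
        · left
          simp [h1, h2, (hr a).symm]
        · right
          refine ⟨by simp [h1], by simp [h2], ?_, ?_⟩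
          · intro d hd; simp [h3 d hd]
          · intro d hd; simp [h4 d hd]
    · rcases hcase with ⟨h1, h2⟩ | ⟨h1, h2, h3, h4⟩
      · obtain ⟨p', h5, h6, h7⟩ := main s t hys hyt hg.1 hg.2 h1 h2
        exact ⟨p', h5, h6, Or.inr h7⟩
      · exact absurd (h3 _ hg.1) hq.2
    · rcases hcase with ⟨h1, h2⟩ | ⟨h1, h2, h3, h4⟩
      · obtain ⟨p', h5, h6, h7, h8, h9, h10⟩ := main t s hyt hys hg.1 hg.2 h1 h2
        exact ⟨p', h5, h6, Or.inr ⟨h7, h8, h10, h9⟩⟩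
      · exact absurd (h4 _ hg.1) hq.2

end helpers

theorem tree_dist {V : Type} {G : SimpleGraph V} (hG : G.IsTree) {a b : V} (p : G.Walk a b)
    (hp : p.IsPath) : G.dist a b = p.length := by
  obtain ⟨q, hq, hl⟩ := hG.1.exists_path_of_dist a b
  rw [← hl, (hG.existsUnique_path a b).unique hp hq]

/-- Distances under reduction. -/
theorem red_dist (T T' : MarkedUniTrivalentTree) (x y : Fin T.n) (h : IsReduction T x y T') :
    ((∃ p : T.G.Walk T.v T.w, p.IsPath ∧ y ∉ p.support) ∧
      T.G.dist T.v T.w = T'.G.dist T'.v T'.w) ∨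
    ((∀ p : T.G.Walk T.v T.w, p.IsPath → y ∈ p.support) ∧
      T.G.dist T.v T.w = T'.G.dist T'.v T'.w + 1) := by
  obtain ⟨-, -, -, -, φ, hφ, hr, hv, hw, s, t, hst, hys, hyt, hsx, htx, hH⟩ := h
  obtain ⟨q, hq, hl⟩ := T'.tree.1.exists_path_of_dist T'.v T'.w
  obtain ⟨p, hp, -, hc⟩ := red_lift hφ (fun a => ((hr _).2 ⟨a, rfl⟩).2) hys hyt hH q hq
  rw [← hv, ← hw, ← hl, tree_dist T.tree p hp]
  rcases hc with ⟨h1, h2⟩ | ⟨h1, h2, -, -⟩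
  · exact Or.inl ⟨⟨p, hp, h1⟩, h2⟩
  · refine Or.inr ⟨fun p' hp' => ?_, h2⟩
    rwa [(T.tree.existsUnique_path _ _).unique hp' hp]

/-- A tree with more than one edge has an auxiliary leaf. -/
theorem exists_leaf (T : MarkedUniTrivalentTree) (hT : T.G.edgeFinset.card ≠ 1) :
    ∃ x, T.G.degree x = 1 ∧ x ≠ T.v ∧ x ≠ T.w := by
  by_contra! hcon
  have h1 := T.tree.card_edgeFinset
  have h2 := T.G.sum_degrees_eq_twice_card_edges
  have h3 : (∑ z, T.G.degree z) + 4 = 3 * T.n := by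
    have hw : T.w ∈ Finset.univ.erase T.v := by simp [T.hvw.symm]
    rw [← Finset.add_sum_erase _ _ (Finset.mem_univ T.v), ← Finset.add_sum_erase _ _ hw,
      T.hv, T.hw, Finset.sum_congr rfl (g := fun _ => 3)]
    · have hc : ((Finset.univ.erase T.v).erase T.w).card + 2 = T.n := by
        have e1 := Finset.card_erase_add_one hw
        have e2 := Finset.card_erase_add_one (Finset.mem_univ T.v)
        rw [Finset.card_univ, Fintype.card_fin] at e2
        omega
      simp only [Finset.sum_const, smul_eq_mul]
      omega
    · intro z hz
      simp only [Finset.mem_erase, Finset.mem_univ, and_true] at hz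
      rcases T.deg z with h | h
      · exact absurd (hcon z h hz.2) hz.1
      · exact h
  rw [Fintype.card_fin] at h1
  omega

theorem exists_reduction (T : MarkedUniTrivalentTree) (x : Fin T.n) (hdx : T.G.degree x = 1)
    (hxv : x ≠ T.v) (hxw : x ≠ T.w) :
    ∃ (y : Fin T.n) (T' : MarkedUniTrivalentTree), IsReduction T x y T' ∧ T'.n < T.n := by
  have hleaf : ∀ a b, T.G.degree a = 1 → T.G.Adj a b → ∀ z, T.G.Adj a z ↔ z = b := by
    intro a b ha hab z
    rw [← SimpleGraph.card_neighborFinset_eq_degree, Finset.card_eq_one] at ha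
    obtain ⟨c, hc⟩ := ha
    have : ∀ z, T.G.Adj a z ↔ z = c := by
      intro z
      rw [← SimpleGraph.mem_neighborFinset, hc, Finset.mem_singleton]
    rw [this] at hab ⊢
    rw [hab]
  obtain ⟨y, hxy⟩ : ∃ y, T.G.Adj x y := by
    have : 0 < T.G.degree x := by omega
    exact (T.G.degree_pos_iff_exists_adj x).1 this
  have hx := hleaf x y hdx hxy
  have hdy : T.G.degree y = 3 := by
    rcases T.deg y with h | h
    · exfalso
      have hy := hleaf y x h hxy.symm
      have key : ∀ a b (p : T.G.Walk a b), (a = x ∨ a = y) → (b = x ∨ b = y) := by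
        intro a b p
        induction p with
        | nil => exact id
        | cons hadj p ih =>
          rintro (rfl | rfl)
          · exact ih (Or.inr ((hx _).1 hadj))
          · exact ih (Or.inl ((hy _).1 hadj))
      obtain ⟨p⟩ := T.tree.1 x T.v
      obtain ⟨q⟩ := T.tree.1 x T.w
      have h1 := (key _ _ p (Or.inl rfl)).resolve_left hxv.symm
      have h2 := (key _ _ q (Or.inl rfl)).resolve_left hxw.symm
      exact T.hvw (h1.trans h2.symm)
    · exact h
  have hyv : y ≠ T.v := by
    intro h; have := T.hv; rw [← h] at this; omega
  have hyw : y ≠ T.w := by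
    intro h; have := T.hw; rw [← h] at this; omega
  have hxmem : x ∈ T.G.neighborFinset y := by
    rw [SimpleGraph.mem_neighborFinset]; exact hxy.symm
  obtain ⟨s, t, hst, hset⟩ : ∃ s t, s ≠ t ∧ (T.G.neighborFinset y).erase x = {s, t} := by
    rw [← Finset.card_eq_two, Finset.card_erase_of_mem hxmem,
      SimpleGraph.card_neighborFinset_eq_degree, hdy]
  have hset' : ∀ z, (z ≠ x ∧ T.G.Adj y z) ↔ (z = s ∨ z = t) := by
    intro z
    have := Finset.ext_iff.1 hset z
    rwa [Finset.mem_erase, SimpleGraph.mem_neighborFinset, Finset.mem_insert,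
      Finset.mem_singleton] at this
  obtain ⟨hsx, hys⟩ := (hset' s).2 (Or.inl rfl)
  obtain ⟨htx, hyt⟩ := (hset' t).2 (Or.inr rfl)
  have hy : ∀ z, T.G.Adj y z ↔ z = x ∨ z = s ∨ z = t := by
    intro z
    rw [← hset']
    by_cases hz : z = x
    · subst hz; simp [hxy.symm]
    · simp [hz]
  have hnst : ¬ T.G.Adj s t := by
    intro h
    apply T.tree.dist_ne_of_adj y h
    rw [SimpleGraph.dist_eq_one_iff_adj.2 hys, SimpleGraph.dist_eq_one_iff_adj.2 hyt]
  -- the vertex set of the reduced tree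
  let W := {z : Fin T.n // z ≠ x ∧ z ≠ y}
  let e : Fin (Fintype.card W) ≃ W := (Fintype.equivFin W).symm
  let φ : Fin (Fintype.card W) → Fin T.n := fun a => (e a).1
  have hφ : Function.Injective φ := Subtype.val_injective.comp e.injective
  have hr : ∀ z : Fin T.n, (z ≠ x ∧ z ≠ y) ↔ z ∈ Set.range φ := by
    intro z
    constructor
    · intro h
      exact ⟨e.symm ⟨z, h⟩, by simp [φ]⟩
    · rintro ⟨a, rfl⟩
      exact (e a).2
  obtain ⟨H, hH⟩ : ∃ H : SimpleGraph (Fin (Fintype.card W)), ∀ a b, H.Adj a b ↔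
      (T.G.Adj (φ a) (φ b) ∨ (φ a = s ∧ φ b = t) ∨ (φ a = t ∧ φ b = s)) := ⟨
    { Adj := fun a b => T.G.Adj (φ a) (φ b) ∨ (φ a = s ∧ φ b = t) ∨ (φ a = t ∧ φ b = s)
      symm := ⟨by
        intro a b h
        rcases h with h | h | h
        · exact Or.inl h.symm
        · exact Or.inr (Or.inr ⟨h.2, h.1⟩)
        · exact Or.inr (Or.inl ⟨h.2, h.1⟩)⟩
      loopless := ⟨by
        intro a h
        rcases h with h | h | h
        · exact h.ne rfl
        · exact hst (h.1.symm.trans h.2)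
        · exact hst (h.2.symm.trans h.1)⟩ }, fun a b => Iff.rfl⟩
  have hdeg : ∀ a, H.degree a = T.G.degree (φ a) :=
    red_degree hφ hr hx hy hst hnst hsx htx hH
  have htree : H.IsTree := red_tree T.tree hφ hr hx hy hst hnst hsx htx hdx hdy hH
  obtain ⟨v', hv'⟩ := (hr T.v).1 ⟨hxv.symm, hyv.symm⟩
  obtain ⟨w', hw'⟩ := (hr T.w).1 ⟨hxw.symm, hyw.symm⟩
  let T' : MarkedUniTrivalentTree :=
    { n := Fintype.card W
      G := H
      tree := htree
      deg := fun a => by rw [hdeg]; exact T.deg _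
      v := v'
      w := w'
      hv := by rw [hdeg, hv']; exact T.hv
      hw := by rw [hdeg, hw']; exact T.hw
      hvw := fun h => T.hvw (by rw [← hv', ← hw', h]) }
  refine ⟨y, T', ⟨hxy, hdx, hxv, hxw, φ, hφ, hr, hv', hw', s, t, hst, hys, hyt, hsx, htx, hH⟩, ?_⟩
  have : Fintype.card W < Fintype.card (Fin T.n) :=
    Fintype.card_subtype_lt (x := x) (by simp)
  rwa [Fintype.card_fin] at this

/-- If `u` satisfies the recursion of Lemma 2.3 — `u = 1` on a single edge, and for any
reduction at an auxiliary leaf `x` with neighbor `y`, `u T = u T'` when `y` is off the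
`v`–`w` path and `u T = 2 · u T'` when `y` is on it — then `u T = 2 ^ (d(v,w) - 1)`,
independently of all choices of reducing leaf. -/
theorem stmt12 (u : MarkedUniTrivalentTree → ℕ)
    (hbase : ∀ T : MarkedUniTrivalentTree, T.G.edgeFinset.card = 1 → u T = 1)
    (hoff : ∀ (T : MarkedUniTrivalentTree) (x y : Fin T.n) (T' : MarkedUniTrivalentTree),
      IsReduction T x y T' → (∃ p : T.G.Walk T.v T.w, p.IsPath ∧ y ∉ p.support) →
      u T = u T')
    (hon : ∀ (T : MarkedUniTrivalentTree) (x y : Fin T.n) (T' : MarkedUniTrivalentTree),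
      IsReduction T x y T' → (∀ p : T.G.Walk T.v T.w, p.IsPath → y ∈ p.support) →
      u T = 2 * u T') :
    ∀ T : MarkedUniTrivalentTree, u T = 2 ^ (T.G.dist T.v T.w - 1) := by
  intro T
  obtain ⟨n, hn⟩ : ∃ n, T.n = n := ⟨_, rfl⟩
  induction n using Nat.strong_induction_on generalizing T with
  | _ n ih =>
    subst hn
    by_cases hT : T.G.edgeFinset.card = 1
    · rw [hbase T hT]
      obtain ⟨p, hp, hl⟩ := T.tree.1.exists_path_of_dist T.v T.w
      have h1 := hp.length_lt
      have h2 := T.tree.card_edgeFinset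
      have h3 : T.G.dist T.v T.w - 1 = 0 := by omega
      rw [h3, pow_zero]
    · obtain ⟨x, hdx, hxv, hxw⟩ := exists_leaf T hT
      obtain ⟨y, T', hred, hlt⟩ := exists_reduction T x hdx hxv hxw
      have hu := ih T'.n hlt T' rfl
      rcases red_dist T T' x y hred with ⟨hp, hd⟩ | ⟨hp, hd⟩
      · rw [hoff T x y T' hred hp, hu, hd]
      · have hpos : 0 < T'.G.dist T'.v T'.w := T'.tree.1.pos_dist_of_ne T'.hvw
        rw [hon T x y T' hred hp, hu, hd, ← pow_succ']
        congr 1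
        omega
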